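/- The triples ρ_1, ..., ρ_{m−1} form a ℂ-basis of the homogeneous degree d−2 part of D₀(f): they are linearly independent over ℂ, and every element (a,b,c) ∈ D₀(f) whose components a, b, c are homogeneous of degree d−2 is a ℂ-linear combination of ρ_1, ..., ρ_{m−1}. -/

import Mathlib

open MvPolynomial

noncomputable abbrev S : Type := MvPolynomial (Fin 3) ℂ

/-- The gradient `∇g = (g_x, g_y, g_z)` of a polynomial `g ∈ S = ℂ[x,y,z]`. -/
noncomputable def grad (g : S) : Fin 3 → S := fun t => pderiv t g

/-- The syzygy triple `ρ_j = Σ_{i≠j} (∏_{k≠i,j} f_k) (∇f_i × ∇f_j)`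
of the 2-form `ω_j = df ∧ df_j/f_j`. -/
noncomputable def rho {m : ℕ} (F : Fin m → S) (j : Fin m) : Fin 3 → S :=
  ∑ i ∈ Finset.univ.erase j,
    (∏ k ∈ (Finset.univ.erase j).erase i, F k) • crossProduct (grad (F i)) (grad (F j))

/-- The Jacobian syzygy module `D₀(f) = {(a,b,c) ∈ S³ : a f_x + b f_y + c f_z = 0}`. -/
noncomputable def D0 (f : S) : Submodule S (Fin 3 → S) where
  carrier := {v | ∑ t, v t * pderiv t f = 0}
  add_mem' {a b} ha hb := by
    simp only [Set.mem_setOf_eq, Pi.add_apply, add_mul, Finset.sum_add_distrib] at *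
    rw [ha, hb, add_zero]
  zero_mem' := by simp
  smul_mem' c v hv := by
    simp only [Set.mem_setOf_eq, Pi.smul_apply, smul_eq_mul, mul_assoc, ← Finset.mul_sum] at *
    rw [hv, mul_zero]

/-- The syzygy triple `σ^x = (0, f_z, −f_y)` of the 2-form `df ∧ dx`. -/
noncomputable def sigx (f : S) : Fin 3 → S := ![0, pderiv 2 f, -pderiv 1 f]
/-- The syzygy triple `σ^y = (−f_z, 0, f_x)` of the 2-form `df ∧ dy`. -/
noncomputable def sigy (f : S) : Fin 3 → S := ![-pderiv 2 f, 0, pderiv 0 f]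
/-- The syzygy triple `σ^z = (f_y, −f_x, 0)` of the 2-form `df ∧ dz`. -/
noncomputable def sigz (f : S) : Fin 3 → S := ![pderiv 1 f, -pderiv 0 f, 0]

/-!
Write `X = (x, y, z)` and `d = deg f`. For `v ∈ D₀(f)` put `w = v × X`; then Euler's identity gives
`∇f × w = d f v`, so `v` can be recovered from `w`, and `∇f × (f ∇f_j / f_j) = f ρ_j`. It is thus
enough to write `w` as a `ℂ`-combination of the triples `f ∇f_j / f_j`.

The curve `C_j` is smooth, so the Koszul complex of `∇f_j` is exact; as `v · ∇f_j` is divisible by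
`f_j`, it follows that `w ≡ a_j ∇f_j` modulo `f_j`. Comparing these congruences at the points of
`C_i ∩ C_j` shows that the residue `a_j` lies locally in the ideal `(∏_{k ≠ j} f_k, f_j)`, and
Noether's `AF + BG` theorem makes this global: `a_j ≡ b_j ∏_{k ≠ j} f_k` modulo `f_j`. As `w` and
`f ∇f_j / f_j` both have degree `d - 1`, only the constant term `c_j` of `b_j` matters. Now
`w - ∑ c_j f ∇f_j / f_j` is divisible by every `f_j`, hence by `f`, which has larger degree, so it
vanishes.

For the relations, `∑ c_j ρ_j = 0` says that `∑ c_j f ∇f_j / f_j` is parallel to `∇f`. Contracting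
with `X` makes it a constant multiple of `∇f = ∑ f ∇f_j / f_j`, and the triples `f ∇f_j / f_j` are
linearly independent, so all the `c_j` agree.
-/

open scoped Matrix

section Koszul

variable {R : Type*} [CommRing R]

/-- Exactness of the Koszul complex `R → R³ → R³ → R` of a triple `A` at its two middle terms, with
the differentials written as `c ↦ c • A`, `w ↦ A ⨯₃ w` and `u ↦ A ⬝ᵥ u`. Over a Noetherian domain it
says that the ideal generated by `A` is the unit ideal or has depth `3`. -/
structure IsKoszulExact (A : Fin 3 → R) : Prop where
  exists_eq_smul : ∀ w, A ⨯₃ w = 0 → ∃ c : R, w = c • A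
  exists_eq_cross : ∀ u, A ⬝ᵥ u = 0 → ∃ r, u = A ⨯₃ r

namespace IsKoszulExact

variable {A : Fin 3 → R}

lemma ne_zero [Nontrivial R] (hA : IsKoszulExact A) : A ≠ 0 := by
  rintro rfl
  obtain ⟨c, hc⟩ := hA.exists_eq_smul 1 (by simp)
  simpa using congrFun hc 0

lemma of_isRelPrime [IsDomain R] [DecompositionMonoid R] (h0 : A 0 ≠ 0)
    (h01 : IsRelPrime (A 0) (A 1))
    (h2 : ∀ p, p * A 2 ∈ Ideal.span {A 0, A 1} → p ∈ Ideal.span {A 0, A 1}) :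
    IsKoszulExact A where
  exists_eq_smul w hw := by
    obtain ⟨-, h20, h10⟩ : _ ∧ A 2 * w 0 = A 0 * w 2 ∧ A 0 * w 1 = A 1 * w 0 := by
      simpa [cross_apply, sub_eq_zero] using hw
    obtain ⟨c, hc⟩ := h01.dvd_of_dvd_mul_left ⟨_, h10.symm⟩
    refine ⟨c, funext fun t ↦ mul_left_cancel₀ h0 ?_⟩
    fin_cases t <;>
      simp only [Fin.reduceFinMk, Fin.zero_eta, Fin.mk_one, Pi.smul_apply, smul_eq_mul]
    · linear_combination A 0 * hc
    · linear_combination h10 + A 1 * hc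
    · linear_combination -h20 + A 2 * hc
  exists_eq_cross u hu := by
    rw [Matrix.vec3_dotProduct] at hu
    obtain ⟨a, b, hab⟩ := Ideal.mem_span_pair.mp <| h2 (u 2) <| Ideal.mem_span_pair.mpr
      ⟨-u 0, -u 1, by linear_combination -hu⟩
    have h : A 0 * (u 0 + A 2 * a) = A 1 * -(u 1 + A 2 * b) := by
      linear_combination hu + A 2 * hab
    obtain ⟨k, hk⟩ := h01.dvd_of_dvd_mul_left ⟨_, h.symm⟩
    refine ⟨![-b, a, k], funext fun t ↦ mul_left_cancel₀ h0 ?_⟩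
    fin_cases t <;>
      simp only [Fin.reduceFinMk, Fin.zero_eta, Fin.mk_one, cross_apply, Matrix.cons_val]
    · linear_combination h + A 1 * hk
    · linear_combination -A 0 * hk
    · linear_combination -A 0 * hab

lemma exists_eq_smul_add_smul (hA : IsKoszulExact A) {P r : Fin 3 → R} {f : R}
    (h : A ⨯₃ P = f • A ⨯₃ r) : ∃ c : R, P = f • r + c • A := by
  obtain ⟨c, hc⟩ := hA.exists_eq_smul (P - f • r) (by rw [map_sub, map_smul, h, sub_self])
  exact ⟨c, by rw [← hc, add_sub_cancel]⟩

lemma exists_eq_cross_of_cross_eq_smul [IsDomain R] (hA : IsKoszulExact A) {P s : Fin 3 → R} {f : R}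
    (hf : f ≠ 0) (h : A ⨯₃ P = f • s) : ∃ r, s = A ⨯₃ r := by
  refine hA.exists_eq_cross s ((mul_eq_zero_iff_left hf).mp ?_)
  rw [← smul_eq_mul, ← dotProduct_smul, ← h, dot_self_cross]

section Transfer

variable [IsDomain R] {M : Matrix (Fin 3) (Fin 3) R} {g : Fin 3 → R}

lemma ne_zero_of_mulVec (hA : IsKoszulExact (M *ᵥ g)) : g ≠ 0 := by
  rintro rfl
  exact hA.ne_zero (Matrix.mulVec_zero M)

lemma exists_eq_smul_of_mulVec (hA : IsKoszulExact (M *ᵥ g)) {w : Fin 3 → R} (hw : g ⨯₃ w = 0) :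
    ∃ c : R, w = c • g := by
  have key (k) : (M *ᵥ g) k • w = (M *ᵥ w) k • g := by
    have := cross_cross_eq_smul_sub_smul' (M k) g w
    rw [hw, map_zero, dotProduct_comm g] at this
    exact (sub_eq_zero.mp this.symm).symm
  obtain ⟨t, ht⟩ := Function.ne_iff.mp hA.ne_zero_of_mulVec
  have hMw : g t • M *ᵥ w = w t • M *ᵥ g := by
    ext k
    simpa [mul_comm] using (congrFun (key k) t).symm
  obtain ⟨c, hc⟩ := hA.exists_eq_smul (M *ᵥ w) <| smul_right_injective _ ht <| by
    simp only [← map_smul, hMw, smul_zero]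
    rw [map_smul, cross_self, smul_zero]
  obtain ⟨k, hk⟩ := Function.ne_iff.mp hA.ne_zero
  refine ⟨c, smul_right_injective _ hk ?_⟩
  simp only [key, hc, Pi.smul_apply, smul_smul, smul_eq_mul, mul_comm c]

-- A chase in the double complex of `A = M *ᵥ g` and `g`: the `u ⨯₃ M k` lift the `A k • u` along
-- `g ⨯₃ ·`. Their Koszul relations hold up to multiples of `g`, so correcting them by multiples of
-- `g` gives `A k • c`, and `c` is the required preimage of `u`.
lemma exists_eq_cross_of_mulVec (hA : IsKoszulExact (M *ᵥ g)) {u : Fin 3 → R} (hu : g ⬝ᵥ u = 0) :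
    ∃ r, u = g ⨯₃ r := by
  set A := M *ᵥ g
  have hT (k) : g ⨯₃ (u ⨯₃ M k) = A k • u := by
    rw [cross_cross_eq_smul_sub_smul', dotProduct_comm u g, hu, zero_smul, sub_zero,
      dotProduct_comm g]
    rfl
  have hpar (k l) : ∃ c : R, A k • (u ⨯₃ M l) - A l • (u ⨯₃ M k) = c • g :=
    hA.exists_eq_smul_of_mulVec (by rw [map_sub, map_smul, map_smul, hT, hT, smul_comm, sub_self])
  choose s hs using hpar
  have hs' (t) : A ⨯₃ (fun k ↦ (u ⨯₃ M k) t) = g t • ![s 1 2, s 2 0, s 0 1] := by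
    have hst (k l) : A k * (u ⨯₃ M l) t - A l * (u ⨯₃ M k) t = g t * s k l := by
      simpa [mul_comm] using congrFun (hs k l) t
    simp only [cross_apply A, hst, Matrix.smul_cons, smul_eq_mul, Matrix.smul_empty]
  obtain ⟨t, ht⟩ := Function.ne_iff.mp hA.ne_zero_of_mulVec
  obtain ⟨r, hr⟩ := hA.exists_eq_cross_of_cross_eq_smul ht (hs' t)
  have hdecomp (t) : ∃ c : R, (fun k ↦ (u ⨯₃ M k) t) = g t • r + c • A :=
    hA.exists_eq_smul_add_smul ((hs' t).trans (by rw [hr]))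
  choose c hc using hdecomp
  obtain ⟨k, hk⟩ := Function.ne_iff.mp hA.ne_zero
  have hTk : u ⨯₃ M k = r k • g + A k • c := by
    ext t
    simpa [mul_comm] using congrFun (hc t) k
  refine ⟨c, smul_right_injective _ hk ?_⟩
  simp only [← hT, hTk, map_add, map_smul, cross_self, smul_zero, zero_add]

end Transfer

lemma of_forall_mem_span [IsDomain R] (hA : IsKoszulExact A) {g : Fin 3 → R}
    (h : ∀ k, A k ∈ Ideal.span (Set.range g)) : IsKoszulExact g := by
  choose M hM using fun k ↦ Ideal.mem_span_range_iff_exists_fun.mp (h k)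
  obtain rfl : Matrix.of M *ᵥ g = A := funext hM
  exact ⟨fun _ ↦ hA.exists_eq_smul_of_mulVec, fun _ ↦ hA.exists_eq_cross_of_mulVec⟩

lemma mem_span_pair_of_forall_mul_mem [IsDomain R] [DecompositionMonoid R] (hA : IsKoszulExact A)
    {f g a : R} (hfg : IsRelPrime f g) (hg : g ≠ 0) (h : ∀ k, A k * a ∈ Ideal.span {f, g}) :
    a ∈ Ideal.span {f, g} := by
  choose P Q hPQ using fun k ↦ Ideal.mem_span_pair.mp (h k)
  have hPQ' : a • A = f • P + g • Q := by
    ext k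
    simp only [Pi.smul_apply, Pi.add_apply, smul_eq_mul]
    linear_combination -hPQ k
  have hcross : f • A ⨯₃ P = -(g • A ⨯₃ Q) := by
    rw [eq_neg_iff_add_eq_zero, ← map_smul, ← map_smul, ← map_add, ← hPQ', map_smul, cross_self,
      smul_zero]
  have hdvd (t) : g ∣ (A ⨯₃ P) t :=
    hfg.symm.dvd_of_dvd_mul_left ⟨-(A ⨯₃ Q) t, by simpa using congrFun hcross t⟩
  choose s hs using hdvd
  have hAP : A ⨯₃ P = g • s := funext hs
  obtain ⟨r, rfl⟩ := hA.exists_eq_cross_of_cross_eq_smul hg hAP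
  obtain ⟨p, rfl⟩ := hA.exists_eq_smul_add_smul hAP
  obtain ⟨q, hq⟩ := hA.exists_eq_smul (Q + f • r) <| smul_right_injective _ hg <| by
    simp only [smul_zero]
    rw [map_add, map_smul, smul_add, smul_comm g f, ← hAP, hcross, add_neg_cancel]
  obtain ⟨k, hk⟩ := Function.ne_iff.mp hA.ne_zero
  refine Ideal.mem_span_pair.mpr ⟨p, q, mul_left_cancel₀ hk ?_⟩
  have hPQk : a * A k = f * (g * r k + p * A k) + g * Q k := by
    simpa [mul_add] using congrFun hPQ' k
  have hqk : Q k + f * r k = q * A k := by simpa using congrFun hq k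
  linear_combination -hPQk - g * hqk

lemma exists_cross_eq_smul_add_smul {g : Fin 3 → R} (hg : IsKoszulExact g) {x v : Fin 3 → R}
    {f n h : R} (hx : g ⬝ᵥ x = n * f) (hv : g ⬝ᵥ v = f * h) :
    ∃ (a : R) (T : Fin 3 → R), v ⨯₃ x = a • g + f • T := by
  obtain ⟨T, hT⟩ := hg.exists_eq_cross (n • v - h • x) (by
    rw [dotProduct_sub, dotProduct_smul, dotProduct_smul, hx, hv, smul_eq_mul, smul_eq_mul]
    ring)
  obtain ⟨a, ha⟩ := hg.exists_eq_smul (v ⨯₃ x - f • T) (by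
    rw [map_sub, map_smul, ← hT, cross_cross_eq_smul_sub_smul', hx, dotProduct_comm v, hv]
    module)
  exact ⟨a, T, by rw [← ha, sub_add_cancel]⟩

end IsKoszulExact

lemma mul_cross_mem_span_pair {w g g' T T' : Fin 3 → R} {a a' f f' : R}
    (h : w = a • g + f • T) (h' : w = a' • g' + f' • T') (t : Fin 3) :
    a' * (g ⨯₃ g') t ∈ Ideal.span {f, f'} := by
  have hcross : a' • g ⨯₃ g' = f • g ⨯₃ T - f' • g ⨯₃ T' := by
    have := congrArg (g ⨯₃ ·) (h.symm.trans h')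
    simp only [map_add, map_smul, cross_self, smul_zero, zero_add] at this
    rw [this, add_sub_cancel_right]
  refine Ideal.mem_span_pair.mpr ⟨(g ⨯₃ T) t, -(g ⨯₃ T') t, ?_⟩
  have := congrFun hcross t
  simp only [Pi.smul_apply, Pi.sub_apply, smul_eq_mul] at this
  linear_combination -this

end Koszul

section ZeroLocus

lemma mem_span_pair_X_pow_of_mul_X_pow_mem {σ R : Type*} [CommSemiring R] {i j k : σ} (hi : i ≠ k)
    (hj : j ≠ k) {a b n : ℕ} {p : MvPolynomial σ R}
    (h : p * X k ^ n ∈ Ideal.span {X i ^ a, X j ^ b}) : p ∈ Ideal.span {X i ^ a, X j ^ b} := by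
  have hpair : ({X i ^ a, X j ^ b} : Set (MvPolynomial σ R)) =
      (fun s ↦ monomial s 1) '' {Finsupp.single i a, Finsupp.single j b} := by
    simp only [Set.image_pair, X_pow_eq_monomial]
  rw [hpair, mem_ideal_span_monomial_image] at h ⊢
  intro u hu
  obtain ⟨s, hs, hle⟩ := h (u + Finsupp.single k n) <| by
    rwa [mem_support_iff, X_pow_eq_monomial, coeff_mul_monomial, mul_one, ← mem_support_iff]
  refine ⟨s, hs, ?_⟩
  rcases hs with rfl | rfl <;> rw [Finsupp.single_le_iff] at hle ⊢
  · simpa [hi.symm] using hle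
  · simpa [hj.symm] using hle

variable {σ K : Type*} [Field K]

lemma isRelPrime_X_pow {i j : σ} (h : i ≠ j) (n : ℕ) :
    IsRelPrime (X i ^ n : MvPolynomial σ K) (X j ^ n) := by
  refine IsRelPrime.pow <| (X_prime (i := i)).irreducible.isRelPrime_iff_not_dvd.mpr ?_
  rwa [X_dvd_X]

lemma isKoszulExact_X_pow (n : ℕ) : IsKoszulExact fun k ↦ (X k ^ n : MvPolynomial (Fin 3) K) :=
  .of_isRelPrime (pow_ne_zero _ (X_ne_zero 0)) (isRelPrime_X_pow (by decide) n)
    fun _ ↦ mem_span_pair_X_pow_of_mul_X_pow_mem (by decide) (by decide)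

variable [IsAlgClosed K]

lemma exists_forall_X_pow_mem [Finite σ] {I : Ideal (MvPolynomial σ K)}
    (hI : zeroLocus K I ⊆ {0}) : ∃ n, ∀ k, X k ^ n ∈ I := by
  have hX (k) : X k ∈ I.radical := by
    rw [← vanishingIdeal_zeroLocus_eq_radical (K := K), mem_vanishingIdeal_iff]
    intro p hp
    simp [Set.mem_singleton_iff.mp (hI hp)]
  choose n hn using hX
  have := Fintype.ofFinite σ
  exact ⟨∑ k, n k, fun k ↦ Ideal.pow_mem_of_pow_mem _ (hn k)
    (Finset.single_le_sum_of_canonicallyOrdered (Finset.mem_univ k))⟩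

lemma isUnit_of_zeroLocus_span_singleton [Finite σ] [Nontrivial σ] {q : MvPolynomial σ K}
    (hq : zeroLocus K (Ideal.span {q}) ⊆ {0}) : IsUnit q := by
  obtain ⟨n, hn⟩ := exists_forall_X_pow_mem hq
  obtain ⟨i, j, hij⟩ := exists_pair_ne σ
  exact isRelPrime_X_pow hij n (Ideal.mem_span_singleton.mp (hn i))
    (Ideal.mem_span_singleton.mp (hn j))

lemma isKoszulExact_of_zeroLocus {g : Fin 3 → MvPolynomial (Fin 3) K}
    (hg : zeroLocus K (Ideal.span (Set.range g)) ⊆ {0}) : IsKoszulExact g := by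
  obtain ⟨n, hn⟩ := exists_forall_X_pow_mem hg
  exact (isKoszulExact_X_pow n).of_forall_mem_span hn

/-- Noether's `AF + BG` theorem, in the form: an ideal generated by two coprime polynomials in three
variables is saturated with respect to the ideal of the origin. -/
lemma mem_span_pair_of_zeroLocus_colon {f g a : MvPolynomial (Fin 3) K} (hfg : IsRelPrime f g)
    (hg : g ≠ 0) (h : zeroLocus K ((Ideal.span {f, g}).colon {a}) ⊆ {0}) :
    a ∈ Ideal.span {f, g} := by
  obtain ⟨n, hn⟩ := exists_forall_X_pow_mem h
  exact (isKoszulExact_X_pow n).mem_span_pair_of_forall_mul_mem hfg hg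
    fun k ↦ Submodule.mem_colon_singleton.mp (hn k)

end ZeroLocus

section Homogeneous

variable {σ R : Type*} [CommRing R] {p q : MvPolynomial σ R} {n k : ℕ}

attribute [local instance] MvPolynomial.gradedAlgebra

lemma homogeneousComponent_add_mul (hq : q.IsHomogeneous n) (p : MvPolynomial σ R) (k : ℕ) :
    homogeneousComponent (k + n) (p * q) = homogeneousComponent k p * q := by
  rw [← decomposition.decompose'_apply, ← decomposition.decompose'_apply]
  exact DirectSum.coe_decompose_mul_add_of_right_mem (homogeneousSubmodule σ R) hq

lemma dvd_homogeneousComponent (hq : q.IsHomogeneous n) (h : q ∣ p) (k : ℕ) :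
    q ∣ homogeneousComponent k p := by
  rw [← Ideal.mem_span_singleton] at h ⊢
  refine homogeneousComponent_mem_of_mem (Ideal.homogeneous_span _ _ ?_) h k
  rintro x rfl
  exact ⟨n, hq⟩

lemma dvd_sub_C_coeff_zero_mul {f b : MvPolynomial σ R} (hf : f.IsHomogeneous k)
    (hp : p.IsHomogeneous n) (hq : q.IsHomogeneous n) (h : f ∣ p - b * q) :
    f ∣ p - C (coeff 0 b) * q := by
  have hbq := homogeneousComponent_add_mul hq b 0
  rw [zero_add, homogeneousComponent_zero] at hbq
  simpa only [map_sub, hbq, homogeneousComponent_eq_self hp] using dvd_homogeneousComponent hf h n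

lemma eq_zero_of_dvd_of_degree_lt [IsDomain R] (hp : p.IsHomogeneous k) (hq : q.IsHomogeneous n)
    (hq0 : q ≠ 0) (hkn : k < n) (h : q ∣ p) : p = 0 := by
  by_contra hp0
  have := totalDegree_le_of_dvd_of_isDomain h hp0
  rw [hp.totalDegree hp0, hq.totalDegree hq0] at this
  omega

lemma pderiv_eq_zero_of_isHomogeneous_zero (hp : p.IsHomogeneous 0) (i : σ) : pderiv i p = 0 := by
  rw [totalDegree_eq_zero_iff_eq_C.mp (Nat.le_zero.mp hp.totalDegree_le), pderiv_C]

lemma pderiv_eq_zero_of_dvd [IsDomain R] {i : σ} (hp : p.IsHomogeneous n) (h : p ∣ pderiv i p) :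
    pderiv i p = 0 := by
  rcases eq_or_ne p 0 with rfl | hp0
  · exact map_zero _
  rcases n.eq_zero_or_pos with rfl | hn
  · exact pderiv_eq_zero_of_isHomogeneous_zero hp i
  · exact eq_zero_of_dvd_of_degree_lt hp.pderiv hp hp0 (Nat.sub_lt hn one_pos) h

end Homogeneous

section Products

variable {ι : Type*} [DecidableEq ι]

lemma derivation_prod {R A M : Type*} [CommSemiring R] [CommSemiring A] [AddCommMonoid M]
    [Algebra R A] [Module A M] [Module R M] (D : Derivation R A M) (s : Finset ι) (F : ι → A) :
    D (∏ i ∈ s, F i) = ∑ i ∈ s, (∏ k ∈ s.erase i, F k) • D (F i) := by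
  induction s using Finset.induction_on with
  | empty => simp
  | insert i s hi ih =>
    rw [Finset.prod_insert hi, Derivation.leibniz, ih, Finset.sum_insert hi,
      Finset.erase_insert hi, Finset.smul_sum, add_comm]
    congr 1
    refine Finset.sum_congr rfl fun j hj ↦ ?_
    have hij : i ≠ j := ne_of_mem_of_not_mem hj hi |>.symm
    rw [Finset.erase_insert_of_ne hij, Finset.prod_insert (by simp [hi]), smul_smul]

lemma dvd_of_sum_prod_erase_mul_eq_zero {R : Type*} [CommRing R] [DecompositionMonoid R]
    [Fintype ι] {F y : ι → R} (hF : Pairwise fun i j ↦ IsRelPrime (F i) (F j))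
    (h : ∑ i, (∏ k ∈ Finset.univ.erase i, F k) * y i = 0) (j : ι) : F j ∣ y j := by
  have hj : IsRelPrime (F j) (∏ k ∈ Finset.univ.erase j, F k) :=
    IsRelPrime.prod_right fun i hi ↦ hF (Finset.ne_of_mem_erase hi).symm
  refine hj.dvd_of_dvd_mul_left ?_
  rw [← Finset.add_sum_erase _ _ (Finset.mem_univ j)] at h
  rw [eq_neg_of_add_eq_zero_left h, dvd_neg]
  refine Finset.dvd_sum fun i hi ↦ (Finset.dvd_prod_of_mem F ?_).mul_right _
  exact Finset.mem_erase.mpr ⟨(Finset.ne_of_mem_erase hi).symm, Finset.mem_univ j⟩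

end Products

section Gradient

lemma grad_mul (f g : S) : grad (f * g) = f • grad g + g • grad f := by
  ext1 t
  simp [grad]

lemma ne_zero_of_grad_ne_zero {f : S} (hf : grad f ≠ 0) : f ≠ 0 := by
  rintro rfl
  exact hf (funext fun t ↦ map_zero _)

lemma grad_dotProduct_X {f : S} {n : ℕ} (hf : f.IsHomogeneous n) : grad f ⬝ᵥ X = (n : S) * f := by
  simpa [dotProduct, grad, mul_comm] using hf.sum_X_mul_pderiv

/-- The plane curve `f = 0` is smooth, expressed on the affine cone: the gradient vanishes at most
at the origin. -/
def IsSmoothCurve (f : S) : Prop :=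
  ∀ p : Fin 3 → ℂ, (∀ t, eval p (pderiv t f) = 0) → p = 0

/-- The plane curves `f = 0` and `g = 0` meet transversally, expressed on the affine cones: the
gradients are linearly independent at the common zeros other than the origin. -/
def IsTransverse (f g : S) : Prop :=
  ∀ p : Fin 3 → ℂ, p ≠ 0 → eval p f = 0 → eval p g = 0 →
    LinearIndependent ℂ ![fun t ↦ eval p (pderiv t f), fun t ↦ eval p (pderiv t g)]

namespace IsSmoothCurve

variable {f : S}

lemma grad_ne_zero (hf : IsSmoothCurve f) : grad f ≠ 0 := fun h ↦
  one_ne_zero (hf 1 fun t ↦ by simpa [grad] using congrArg (eval 1) (congrFun h t))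

lemma ne_zero (hf : IsSmoothCurve f) : f ≠ 0 :=
  ne_zero_of_grad_ne_zero hf.grad_ne_zero

lemma isKoszulExact_grad (hf : IsSmoothCurve f) : IsKoszulExact (grad f) := by
  refine isKoszulExact_of_zeroLocus fun p hp ↦ hf p fun t ↦ ?_
  simpa using! hp _ (Ideal.subset_span ⟨t, rfl⟩)

end IsSmoothCurve

namespace IsTransverse

variable {f g : S}

lemma exists_eval_cross_ne_zero (hfg : IsTransverse f g) {p : Fin 3 → ℂ} (hp : p ≠ 0)
    (hf : eval p f = 0) (hg : eval p g = 0) : ∃ t, eval p ((grad f ⨯₃ grad g) t) ≠ 0 := by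
  have := crossProduct_ne_zero_iff_linearIndependent.mpr (hfg p hp hf hg)
  contrapose! this
  ext t
  have ht := this t
  fin_cases t <;> simpa [cross_apply, grad] using ht

lemma isRelPrime (hfg : IsTransverse f g) : IsRelPrime f g := by
  rintro q ⟨a, rfl⟩ ⟨b, rfl⟩
  refine isUnit_of_zeroLocus_span_singleton fun p hp ↦ ?_
  have hq : eval p q = 0 := by simpa using hp q (Ideal.mem_span_singleton_self q)
  by_contra hp0
  obtain ⟨t, ht⟩ := hfg.exists_eval_cross_ne_zero hp0 (by simp [hq]) (by simp [hq])
  refine ht ?_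
  have hcross : grad (q * a) ⨯₃ grad (q * b) =
      q • (q • grad a ⨯₃ grad b + b • grad a ⨯₃ grad q + a • grad q ⨯₃ grad b) := by
    simp only [grad_mul, map_add, map_smul, LinearMap.add_apply, LinearMap.smul_apply, cross_self]
    module
  simp [hcross, hq]

end IsTransverse

end Gradient

section LogForm

variable {ι : Type*} [Fintype ι] [DecidableEq ι]

/-- The coefficient triple of the `1`-form `f df_j / f_j`, where `f = ∏ i, F i` and `f_j = F j`. -/
noncomputable def logForm (F : ι → S) (j : ι) : Fin 3 → S :=
  (∏ k ∈ Finset.univ.erase j, F k) • grad (F j)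

variable {F : ι → S} {e : ι → ℕ}

lemma sum_logForm (F : ι → S) : ∑ j, logForm F j = grad (∏ i, F i) := by
  ext1 t
  simp [logForm, grad, derivation_prod]

lemma dvd_logForm {i j : ι} (hij : i ≠ j) (t : Fin 3) : F i ∣ logForm F j t :=
  (Finset.dvd_prod_of_mem F (Finset.mem_erase.mpr ⟨hij, Finset.mem_univ i⟩)).mul_right _

lemma isHomogeneous_logForm (hhom : ∀ j, (F j).IsHomogeneous (e j)) (j : ι) (t : Fin 3) :
    (logForm F j t).IsHomogeneous (∑ i, e i - 1) := by
  have hprod := IsHomogeneous.prod (Finset.univ.erase j) F e fun i _ ↦ hhom i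
  rcases (e j).eq_zero_or_pos with hj | hj
  · have : logForm F j t = 0 := by
      simp [logForm, grad, pderiv_eq_zero_of_isHomogeneous_zero (hj ▸ hhom j) t]
    exact this ▸ isHomogeneous_zero _ _ _
  · rw [← Finset.sum_erase_add _ _ (Finset.mem_univ j), Nat.add_sub_assoc hj]
    exact hprod.mul (hhom j).pderiv

lemma logForm_dotProduct_X (hhom : ∀ j, (F j).IsHomogeneous (e j)) (j : ι) :
    logForm F j ⬝ᵥ X = (e j : S) * ∏ i, F i := by
  rw [logForm, smul_dotProduct, grad_dotProduct_X (hhom j), smul_eq_mul,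
    ← Finset.prod_erase_mul _ F (Finset.mem_univ j)]
  ring

lemma linearIndependent_logForm (hhom : ∀ j, (F j).IsHomogeneous (e j))
    (hrel : Pairwise fun i j ↦ IsRelPrime (F i) (F j)) (hgrad : ∀ j, grad (F j) ≠ 0) :
    LinearIndependent ℂ (logForm F) := by
  rw [Fintype.linearIndependent_iff]
  intro c hc j
  by_contra hcj
  refine hgrad j (funext fun t ↦ pderiv_eq_zero_of_dvd (hhom j) ?_)
  have hsum : ∑ i, (∏ k ∈ Finset.univ.erase i, F k) * (C (c i) * pderiv t (F i)) = 0 := by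
    refine Eq.trans ?_ (congrFun hc t)
    rw [Finset.sum_apply]
    refine Finset.sum_congr rfl fun i _ ↦ ?_
    simp only [logForm, grad, Pi.smul_apply, smul_eq_mul, smul_eq_C_mul]
    ring
  exact (((Ne.isUnit hcj).map C).dvd_mul_left).mp (dvd_of_sum_prod_erase_mul_eq_zero hrel hsum j)

end LogForm

section Rho

variable {m : ℕ} {F : Fin m → S} {e : Fin m → ℕ}

lemma sum_rho (F : Fin m → S) : ∑ j, rho F j = 0 := by
  refine self_eq_neg.mp ?_
  simp only [rho, ← Finset.sum_neg_distrib]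
  rw [Finset.sum_comm' (t' := Finset.univ) (s' := fun i ↦ Finset.univ.erase i)
    (by simp [ne_comm])]
  refine Finset.sum_congr rfl fun j _ ↦ Finset.sum_congr rfl fun i _ ↦ ?_
  rw [Finset.erase_right_comm, ← smul_neg, cross_anticomm]

lemma prod_smul_rho (F : Fin m → S) (j : Fin m) :
    (∏ i, F i) • rho F j = grad (∏ i, F i) ⨯₃ logForm F j := by
  rw [← sum_logForm, rho, map_sum, LinearMap.sum_apply,
    ← Finset.add_sum_erase _ _ (Finset.mem_univ j), cross_self, zero_add, Finset.smul_sum]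
  refine Finset.sum_congr rfl fun i hi ↦ ?_
  simp only [logForm, map_smul, LinearMap.smul_apply, smul_smul]
  rw [← Finset.mul_prod_erase _ F (Finset.mem_univ i), ← Finset.mul_prod_erase _ F hi]
  congr 1
  ring

lemma prod_smul_sum_smul_rho (F : Fin m → S) (c : Fin m → ℂ) :
    (∏ i, F i) • ∑ j, c j • rho F j = grad (∏ i, F i) ⨯₃ ∑ j, c j • logForm F j := by
  simp only [map_sum, Finset.smul_sum, LinearMap.map_smul_of_tower, ← prod_smul_rho]
  exact Finset.sum_congr rfl fun j _ ↦ smul_comm _ _ _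

lemma eq_of_sum_smul_rho_eq_zero (hhom : ∀ j, (F j).IsHomogeneous (e j))
    (hrel : Pairwise fun i j ↦ IsRelPrime (F i) (F j)) (hgrad : ∀ j, grad (F j) ≠ 0)
    {c : Fin m → ℂ} (hc : ∑ j, c j • rho F j = 0) (i j : Fin m) : c i = c j := by
  set d := ∑ i, e i
  set f := ∏ i, F i
  have hf0 : f ≠ 0 := Finset.prod_ne_zero_iff.mpr fun j _ ↦ ne_zero_of_grad_ne_zero (hgrad j)
  have hf : f.IsHomogeneous d := IsHomogeneous.prod _ _ _ fun i _ ↦ hhom i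
  set W := ∑ j, c j • logForm F j
  have hWX : W ⬝ᵥ X = (∑ j, c j * e j) • f := by
    simp only [W, sum_dotProduct, smul_dotProduct, logForm_dotProduct_X hhom, Finset.sum_smul,
      mul_smul, Nat.cast_smul_eq_nsmul, nsmul_eq_mul, f]
  have hcross : grad f ⨯₃ W = 0 := by
    rw [← prod_smul_sum_smul_rho, hc, smul_zero]
  have hW : (∑ j, c j * e j) • grad f = (d : ℂ) • W := by
    have h := cross_cross_eq_smul_sub_smul (grad f) W X
    rw [hcross, map_zero, LinearMap.zero_apply, grad_dotProduct_X hf, hWX] at h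
    rw [mul_comm, mul_smul, smul_assoc, ← smul_comm f, Nat.cast_smul_eq_nsmul,
      ← Nat.cast_smul_eq_nsmul ℂ] at h
    exact smul_right_injective (Fin 3 → S) hf0 (sub_eq_zero.mp h.symm).symm
  have hli := Fintype.linearIndependent_iff.mp (linearIndependent_logForm hhom hrel hgrad)
    (fun k ↦ ∑ j, c j * e j - d * c k) <| by
      simp only [sub_smul, mul_smul, Finset.sum_sub_distrib, ← Finset.smul_sum, sum_logForm]
      exact sub_eq_zero.mpr hW
  have hd : (d : ℂ) ≠ 0 := by
    refine Nat.cast_ne_zero.mpr fun hd ↦ hgrad i (funext fun t ↦ ?_)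
    have hi : e i = 0 := Finset.sum_eq_zero_iff.mp hd i (Finset.mem_univ i)
    exact pderiv_eq_zero_of_isHomogeneous_zero (hi ▸ hhom i) t
  exact mul_left_cancel₀ hd ((sub_eq_zero.mp (hli i)).symm.trans (sub_eq_zero.mp (hli j)))

end Rho

section NormalCrossing

/-- The curves `F i = 0` are smooth and form a normal crossing divisor: they meet pairwise
transversally, and no three of them share a point. -/
structure IsNormalCrossing {ι : Type*} (F : ι → S) : Prop where
  smooth : ∀ j, IsSmoothCurve (F j)
  transverse : Pairwise fun i j ↦ IsTransverse (F i) (F j)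
  no_triple : ∀ i j k, i ≠ j → i ≠ k → j ≠ k → ∀ p : Fin 3 → ℂ, p ≠ 0 →
    ¬(eval p (F i) = 0 ∧ eval p (F j) = 0 ∧ eval p (F k) = 0)

variable {ι : Type*} {F : ι → S}

lemma IsNormalCrossing.pairwise_isRelPrime (hF : IsNormalCrossing F) :
    Pairwise fun i j ↦ IsRelPrime (F i) (F j) :=
  fun _ _ hij ↦ (hF.transverse hij).isRelPrime

variable [Fintype ι]

lemma dvd_grad_dotProduct (hrel : Pairwise fun i j ↦ IsRelPrime (F i) (F j)) {v : Fin 3 → S}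
    (hv : v ∈ D0 (∏ i, F i)) (j : ι) : F j ∣ grad (F j) ⬝ᵥ v := by
  classical
  refine dvd_of_sum_prod_erase_mul_eq_zero hrel (y := fun j ↦ grad (F j) ⬝ᵥ v) ?_ j
  have hv' : grad (∏ i, F i) ⬝ᵥ v = 0 := (dotProduct_comm _ _).trans hv
  rw [← sum_logForm, sum_dotProduct] at hv'
  simpa only [logForm, smul_dotProduct, smul_eq_mul] using hv'

variable [DecidableEq ι] {e : ι → ℕ}

namespace IsNormalCrossing

lemma residue_mem_span_pair (hF : IsNormalCrossing F) {w : Fin 3 → S} {a : ι → S}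
    {T : ι → Fin 3 → S} (hw : ∀ i, w = a i • grad (F i) + F i • T i) (j : ι) :
    a j ∈ Ideal.span {∏ k ∈ Finset.univ.erase j, F k, F j} := by
  have hrel : IsRelPrime (∏ k ∈ Finset.univ.erase j, F k) (F j) :=
    IsRelPrime.prod_left fun i hi ↦ hF.pairwise_isRelPrime (Finset.ne_of_mem_erase hi)
  refine mem_span_pair_of_zeroLocus_colon hrel (hF.smooth j).ne_zero fun p hp ↦ ?_
  by_contra hp0
  have heval {q : S} (hq : q * a j ∈ Ideal.span {∏ k ∈ Finset.univ.erase j, F k, F j}) :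
      eval p q = 0 := by
    simpa using! hp q (Submodule.mem_colon_singleton.mpr hq)
  have hj : eval p (F j) = 0 :=
    heval (Ideal.mul_mem_right _ _ (Ideal.subset_span (by simp)))
  have hprod : eval p (∏ k ∈ Finset.univ.erase j, F k) = 0 :=
    heval (Ideal.mul_mem_right _ _ (Ideal.subset_span (by simp)))
  rw [map_prod, Finset.prod_eq_zero_iff] at hprod
  obtain ⟨i, hi, hi0⟩ := hprod
  have hij := Finset.ne_of_mem_erase hi
  obtain ⟨t, ht⟩ := (hF.transverse hij).exists_eval_cross_ne_zero hp0 hi0 hj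
  have hmem : (∏ k ∈ (Finset.univ.erase j).erase i, F k) * (grad (F i) ⨯₃ grad (F j)) t * a j ∈
      Ideal.span {∏ k ∈ Finset.univ.erase j, F k, F j} := by
    obtain ⟨x, y, hxy⟩ := Ideal.mem_span_pair.mp (mul_cross_mem_span_pair (hw i) (hw j) t)
    refine Ideal.mem_span_pair.mpr ⟨x, (∏ k ∈ (Finset.univ.erase j).erase i, F k) * y, ?_⟩
    rw [← Finset.mul_prod_erase _ F hi]
    linear_combination (∏ k ∈ (Finset.univ.erase j).erase i, F k) * hxy
  have hrest := (mul_eq_zero_iff_right ht).mp ((map_mul _ _ _).symm.trans (heval hmem))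
  rw [map_prod, Finset.prod_eq_zero_iff] at hrest
  obtain ⟨k, hk, hk0⟩ := hrest
  have hki := Finset.ne_of_mem_erase hk
  have hkj := Finset.ne_of_mem_erase (Finset.mem_of_mem_erase hk)
  exact hF.no_triple i j k hij hki.symm hkj.symm p hp0 ⟨hi0, hj, hk0⟩

end IsNormalCrossing

end NormalCrossing

section Residues

namespace IsNormalCrossing

variable {ι : Type*} [Fintype ι] {F : ι → S} {e : ι → ℕ}

lemma exists_cross_X_eq (hF : IsNormalCrossing F) (hhom : ∀ j, (F j).IsHomogeneous (e j))
    {v : Fin 3 → S} (hv : v ∈ D0 (∏ i, F i)) (j : ι) :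
    ∃ (a : S) (T : Fin 3 → S), v ⨯₃ X = a • grad (F j) + F j • T := by
  obtain ⟨h, hh⟩ := dvd_grad_dotProduct hF.pairwise_isRelPrime hv j
  exact (hF.smooth j).isKoszulExact_grad.exists_cross_eq_smul_add_smul
    (grad_dotProduct_X (hhom j)) hh

variable [DecidableEq ι] {w : Fin 3 → S}

lemma exists_dvd_sub_C_mul_logForm (hF : IsNormalCrossing F)
    (hhom : ∀ j, (F j).IsHomogeneous (e j)) (hw : ∀ t, (w t).IsHomogeneous (∑ i, e i - 1))
    (hres : ∀ j, ∃ (a : S) (T : Fin 3 → S), w = a • grad (F j) + F j • T) (j : ι) :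
    ∃ c : ℂ, ∀ t, F j ∣ w t - C c * logForm F j t := by
  choose a T haT using hres
  obtain ⟨b, u, hbu⟩ := Ideal.mem_span_pair.mp (hF.residue_mem_span_pair haT j)
  refine ⟨coeff 0 b, fun t ↦ dvd_sub_C_coeff_zero_mul (hhom j) (hw t)
    (isHomogeneous_logForm hhom j t) ⟨u * grad (F j) t + T j t, ?_⟩⟩
  have hwt : w t = a j * grad (F j) t + F j * T j t := congrFun (haT j) t
  simp only [logForm, Pi.smul_apply, smul_eq_mul]
  linear_combination hwt - grad (F j) t * hbu

lemma exists_eq_sum_smul_logForm (hF : IsNormalCrossing F)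
    (hhom : ∀ j, (F j).IsHomogeneous (e j)) (hd : ∑ i, e i ≠ 0)
    (hw : ∀ t, (w t).IsHomogeneous (∑ i, e i - 1))
    (hres : ∀ j, ∃ (a : S) (T : Fin 3 → S), w = a • grad (F j) + F j • T) :
    ∃ c : ι → ℂ, w = ∑ j, c j • logForm F j := by
  choose c hc using hF.exists_dvd_sub_C_mul_logForm hhom hw hres
  refine ⟨c, funext fun t ↦ sub_eq_zero.mp ?_⟩
  have hsum : (∑ j, c j • logForm F j) t = ∑ j, C (c j) * logForm F j t := by
    simp only [Finset.sum_apply, Pi.smul_apply, smul_eq_C_mul]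
  rw [hsum]
  refine eq_zero_of_dvd_of_degree_lt
    ((hw t).sub (IsHomogeneous.sum _ _ _ fun j _ ↦ (isHomogeneous_logForm hhom j t).C_mul _))
    (IsHomogeneous.prod _ _ _ fun i _ ↦ hhom i)
    (Finset.prod_ne_zero_iff.mpr fun j _ ↦ (hF.smooth j).ne_zero)
    (Nat.sub_lt (Nat.pos_of_ne_zero hd) one_pos)
    (Fintype.prod_dvd_of_isRelPrime hF.pairwise_isRelPrime fun j ↦ ?_)
  rw [← Finset.add_sum_erase _ _ (Finset.mem_univ j), ← sub_sub]
  exact dvd_sub (hc j t) <| Finset.dvd_sum fun i hi ↦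
    (dvd_logForm (Finset.ne_of_mem_erase hi).symm t).mul_left _

end IsNormalCrossing

end Residues

section Basis

lemma isHomogeneous_cross_X {v : Fin 3 → S} {n : ℕ} (hv : ∀ t, (v t).IsHomogeneous n)
    (t : Fin 3) : ((v ⨯₃ X) t).IsHomogeneous (n + 1) := by
  have h (i j k l : Fin 3) : (v i * X j - v k * X l).IsHomogeneous (n + 1) :=
    ((hv i).mul (isHomogeneous_X ℂ j)).sub ((hv k).mul (isHomogeneous_X ℂ l))
  rw [cross_apply]
  fin_cases t <;> exact h _ _ _ _

lemma grad_cross_cross_X {f : S} {d : ℕ} (hf : f.IsHomogeneous d) {v : Fin 3 → S}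
    (hv : v ∈ D0 f) : grad f ⨯₃ (v ⨯₃ X) = f • (d : ℂ) • v := by
  have hv' : v ⬝ᵥ grad f = 0 := hv
  rw [cross_cross_eq_smul_sub_smul', grad_dotProduct_X hf, hv', zero_smul, sub_zero, mul_comm,
    mul_smul, Nat.cast_smul_eq_nsmul, Nat.cast_smul_eq_nsmul]

lemma IsNormalCrossing.exists_eq_sum_smul_rho {m : ℕ} {F : Fin m → S} {e : Fin m → ℕ}
    (hF : IsNormalCrossing F) (hhom : ∀ j, (F j).IsHomogeneous (e j)) (hd : 2 ≤ ∑ i, e i)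
    {v : Fin 3 → S} (hv : v ∈ D0 (∏ i, F i)) (hvhom : ∀ t, (v t).IsHomogeneous (∑ i, e i - 2)) :
    ∃ c : Fin m → ℂ, v = ∑ j, c j • rho F j := by
  have hd0 : ∑ i, e i ≠ 0 := by omega
  have hw (t) : ((v ⨯₃ X) t).IsHomogeneous (∑ i, e i - 1) := by
    simpa only [show ∑ i, e i - 2 + 1 = ∑ i, e i - 1 by omega] using isHomogeneous_cross_X hvhom t
  obtain ⟨c, hc⟩ :=
    hF.exists_eq_sum_smul_logForm hhom hd0 hw (hF.exists_cross_X_eq hhom hv)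
  have hf0 : ∏ i, F i ≠ 0 := Finset.prod_ne_zero_iff.mpr fun j _ ↦ (hF.smooth j).ne_zero
  have hdv : ((∑ i, e i : ℕ) : ℂ) • v = ∑ j, c j • rho F j := by
    refine smul_right_injective (Fin 3 → S) hf0 ?_
    exact (grad_cross_cross_X (IsHomogeneous.prod _ _ _ fun i _ ↦ hhom i) hv).symm.trans
      ((congrArg _ hc).trans (prod_smul_sum_smul_rho F c).symm)
  refine ⟨fun j ↦ ((∑ i, e i : ℕ) : ℂ)⁻¹ * c j, ?_⟩
  simp only [mul_smul, ← Finset.smul_sum, ← hdv]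
  rw [inv_smul_smul₀ (Nat.cast_ne_zero.mpr hd0)]

section LinearRelation

variable {k M : Type*} [Ring k] [AddCommGroup M] [Module k M] {n : ℕ} {r : Fin (n + 1) → M}

lemma linearIndependent_castSucc
    (h : ∀ c : Fin (n + 1) → k, ∑ j, c j • r j = 0 → ∀ i j, c i = c j) :
    LinearIndependent k fun j : Fin n ↦ r j.castSucc := by
  rw [Fintype.linearIndependent_iff]
  intro c hc j
  have := h (Fin.snoc c 0) (by simpa [Fin.sum_univ_castSucc] using hc) j.castSucc (Fin.last n)
  simpa using this

lemma sum_smul_eq_sum_castSucc (hr : ∑ j, r j = 0) (c : Fin (n + 1) → k) :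
    ∑ j, c j • r j = ∑ j : Fin n, (c j.castSucc - c (Fin.last n)) • r j.castSucc := by
  have hlast : r (Fin.last n) = -∑ j : Fin n, r j.castSucc :=
    eq_neg_of_add_eq_zero_right ((Fin.sum_univ_castSucc r).symm.trans hr)
  simp only [sub_smul, Finset.sum_sub_distrib, ← Finset.smul_sum]
  rw [Fin.sum_univ_castSucc, hlast, smul_neg, sub_eq_add_neg]

end LinearRelation

theorem rho_basis_degree_d_sub_two_general {m : ℕ} {F : Fin m → S} {e : Fin m → ℕ}
    (hd : 2 ≤ ∑ i, e i) (hhom : ∀ j, (F j).IsHomogeneous (e j)) (hF : IsNormalCrossing F) :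
    LinearIndependent ℂ (fun j : Fin (m - 1) => rho F (Fin.castLE (Nat.sub_le m 1) j)) ∧
    (∀ v : Fin 3 → S, v ∈ D0 (∏ i, F i) →
      (∀ t, (v t).IsHomogeneous ((∑ i, e i) - 2)) →
      ∃ c : Fin (m - 1) → ℂ,
        v = ∑ j : Fin (m - 1), c j • rho F (Fin.castLE (Nat.sub_le m 1) j)) := by
  obtain _ | n := m
  · simp at hd
  refine ⟨?_, fun v hv hvhom ↦ ?_⟩
  · exact linearIndependent_castSucc fun c hc ↦ eq_of_sum_smul_rho_eq_zero hhom
      hF.pairwise_isRelPrime (fun j ↦ (hF.smooth j).grad_ne_zero) hc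
  · obtain ⟨c, rfl⟩ := hF.exists_eq_sum_smul_rho hhom hd hv hvhom
    exact ⟨_, sum_smul_eq_sum_castSucc (sum_rho F) c⟩

end Basis

/-- `ρ_1, …, ρ_{m−1}` form a `ℂ`-basis of the homogeneous degree `d−2` part
of `D₀(f)`: they are `ℂ`-linearly independent, and every element of `D₀(f)` with components
homogeneous of degree `d−2` is a `ℂ`-linear combination of them. -/
theorem rho_basis_degree_d_sub_two
    (m : ℕ) (hm : 4 ≤ m) (F : Fin m → S) (e : Fin m → ℕ)
    (he : ∀ j, 1 ≤ e j)
    (hhom : ∀ j, (F j).IsHomogeneous (e j))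
    (hsmooth : ∀ j, ∀ p : Fin 3 → ℂ,
      (∀ t, eval p (pderiv t (F j)) = 0) → p = 0)
    (hnc : ∀ i j : Fin m, i ≠ j → ∀ p : Fin 3 → ℂ, p ≠ 0 →
      eval p (F i) = 0 → eval p (F j) = 0 →
      LinearIndependent ℂ
        ![fun t => eval p (pderiv t (F i)), fun t => eval p (pderiv t (F j))])
    (htriple : ∀ i j k : Fin m, i ≠ j → i ≠ k → j ≠ k → ∀ p : Fin 3 → ℂ, p ≠ 0 →
      ¬(eval p (F i) = 0 ∧ eval p (F j) = 0 ∧ eval p (F k) = 0)) :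
    LinearIndependent ℂ (fun j : Fin (m - 1) => rho F (Fin.castLE (Nat.sub_le m 1) j)) ∧
    (∀ v : Fin 3 → S, v ∈ D0 (∏ i, F i) →
      (∀ t, (v t).IsHomogeneous ((∑ i, e i) - 2)) →
      ∃ c : Fin (m - 1) → ℂ,
        v = ∑ j : Fin (m - 1), c j • rho F (Fin.castLE (Nat.sub_le m 1) j)) := by
  have hd : m ≤ ∑ i, e i := by
    simpa using Finset.card_nsmul_le_sum Finset.univ e 1 fun i _ ↦ he i
  exact rho_basis_degree_d_sub_two_general (by omega) hhom ⟨hsmooth, hnc, htriple⟩
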